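/- arXiv:1312.2239 — 12 statements merged into one kernel-verified Lean document; each statement's English description precedes it below -/
import Mathlib

section
/- (Joint Distribution Criterion, finite inputs.) For k = 1,…,n let Λ_k = {1,…,m_k} with m_k ≥ 1, let (S_k, 𝔖_k) be a measurable space, let Φ ⊆ Λ₁ × ⋯ × Λₙ be a nonempty set of allowable treatments, and for each φ ∈ Φ let μ_φ be a probability measure on the product measurable space S₁ × ⋯ × Sₙ. Then the family (μ_φ)_{φ∈Φ} satisfies selective influences if and only if there exists a reduced coupling vector for (μ_φ)_{φ∈Φ}, i.e., a probability measure ν on the product measurable space ∏_{k=1}^n ∏_{λ∈Λ_k} S_k (one coordinate per each value of each input) such that for every φ = (λ₁,…,λₙ) ∈ Φ the pushforward of ν under the map h ↦ (h(1)(λ₁),…,h(n)(λₙ)) equals μ_φ. -/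
open MeasureTheory

universe u

/-- Joint Distribution Criterion, finite inputs. With inputs
`λ_k ∈ Λ_k = Fin (m k)` (`m k ≥ 1`), outputs valued in measurable spaces `S k`, a
nonempty set `Φ` of allowable treatments, and joint output distributions `μ φ` for
`φ ∈ Φ`, the family `(μ φ)` satisfies selective influences if and only if there exists
a reduced coupling vector: a probability measure `ν` on the product space with one
coordinate per each value of each input, whose pushforward under
`h ↦ (h 1 (λ₁), …, h n (λₙ))` equals `μ φ` for every allowable treatment
`φ = (λ₁, …, λₙ)`. -/
theorem selective_influences_iff_reduced_coupling_vector
    {n : ℕ} (m : Fin n → ℕ) (hm : ∀ k, 1 ≤ m k)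
    (S : Fin n → Type u) [∀ k, MeasurableSpace (S k)]
    (Φ : Set (∀ k, Fin (m k))) (hΦ : Φ.Nonempty)
    (μ : (∀ k, Fin (m k)) → Measure (∀ k, S k))
    (hμ : ∀ φ ∈ Φ, IsProbabilityMeasure (μ φ)) :
    (∃ (Ω : Type u) (_ : MeasurableSpace Ω) (P : Measure Ω),
      IsProbabilityMeasure P ∧
      ∃ f : ∀ k, Fin (m k) → Ω → S k,
        (∀ k lam, Measurable (f k lam)) ∧
        ∀ φ ∈ Φ, Measure.map (fun ω k => f k (φ k) ω) P = μ φ)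
    ↔
    (∃ ν : Measure (∀ k, Fin (m k) → S k), IsProbabilityMeasure ν ∧
      ∀ φ ∈ Φ, Measure.map (fun h : ∀ k, Fin (m k) → S k => fun k => h k (φ k)) ν = μ φ) := by
  constructor
  · rintro ⟨Ω, _, P, hP, f, hf, h⟩
    have hF : Measurable (fun ω k lam => f k lam ω) :=
      measurable_pi_lambda _ fun k => measurable_pi_lambda _ fun lam => hf k lam
    refine ⟨Measure.map (fun ω k lam => f k lam ω) P,
      Measure.isProbabilityMeasure_map hF.aemeasurable, fun φ hφ => ?_⟩
    have hG : Measurable (fun h : ∀ k, Fin (m k) → S k => fun k => h k (φ k)) :=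
      measurable_pi_lambda _ fun k => (measurable_pi_apply (φ k)).comp (measurable_pi_apply k)
    rw [Measure.map_map hG hF]
    exact h φ hφ
  · rintro ⟨ν, hν, h⟩
    exact ⟨∀ k, Fin (m k) → S k, inferInstance, ν, hν, fun k lam h => h k lam,
      fun k lam => (measurable_pi_apply lam).comp (measurable_pi_apply k), h⟩
end

section
/- (Joint Distribution Criterion, general version.) Let K be an arbitrary nonempty index set; for each k ∈ K let Λ_k be a nonempty set and (S_k, 𝔖_k) a measurable space; let Φ ⊆ ∏_{k∈K} Λ_k be nonempty; and for each φ ∈ Φ let μ_φ be a probability measure on the product measurable space ∏_{k∈K} S_k. Then there exist a probability space (Ω, 𝔉, P) and functions f_k : Λ_k × Ω → S_k (measurable in the second argument for each fixed λ ∈ Λ_k) such that for every φ ∈ Φ the pushforward of P under ω ↦ (f_k(φ(k), ω))_{k∈K} equals μ_φ, if and only if there exists a probability measure ν on the product measurable space ∏_{k∈K} ∏_{λ∈Λ_k} S_k such that for every φ ∈ Φ the pushforward of ν under h ↦ (h(k)(φ(k)))_{k∈K} equals μ_φ. -/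
open MeasureTheory

universe u v w

/-- Joint Distribution Criterion, general version. For an arbitrary
nonempty index set `K`, nonempty input-value sets `Λ k`, measurable output spaces `S k`,
a nonempty set `Φ` of allowable treatments and joint output distributions `μ φ` for
`φ ∈ Φ`, selective influences holds (existence of a common probability space and
functions `f k : Λ k × Ω → S k`, measurable in the second argument, whose joint
pushforward at every treatment is `μ φ`) if and only if there exists a reduced coupling
vector: a probability measure `ν` on `∏ k, (Λ k → S k)` whose pushforward under
`h ↦ (k ↦ h k (φ k))` equals `μ φ` for every `φ ∈ Φ`. -/
theorem selective_influences_iff_reduced_coupling_vector_general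
    {K : Type u} [Nonempty K]
    (Λ : K → Type v) [∀ k, Nonempty (Λ k)]
    (S : K → Type w) [∀ k, MeasurableSpace (S k)]
    (Φ : Set (∀ k, Λ k)) (hΦ : Φ.Nonempty)
    (μ : (∀ k, Λ k) → Measure (∀ k, S k))
    (hμ : ∀ φ ∈ Φ, IsProbabilityMeasure (μ φ)) :
    (∃ (Ω : Type (max u v w)) (_ : MeasurableSpace Ω) (P : Measure Ω),
      IsProbabilityMeasure P ∧
      ∃ f : ∀ k, Λ k → Ω → S k,
        (∀ k lam, Measurable (f k lam)) ∧
        ∀ φ ∈ Φ, Measure.map (fun ω k => f k (φ k) ω) P = μ φ)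
    ↔
    (∃ ν : Measure (∀ k, Λ k → S k), IsProbabilityMeasure ν ∧
      ∀ φ ∈ Φ, Measure.map (fun h : ∀ k, Λ k → S k => fun k => h k (φ k)) ν = μ φ) := by
  constructor
  · rintro ⟨Ω, mΩ, P, hP, f, hf, h⟩
    have hF : Measurable (fun ω => fun k lam => f k lam ω : Ω → ∀ k, Λ k → S k) :=
      measurable_pi_lambda _ fun k => measurable_pi_lambda _ fun lam => hf k lam
    refine ⟨Measure.map (fun ω => fun k lam => f k lam ω) P,
      Measure.isProbabilityMeasure_map hF.aemeasurable, fun φ hφ => ?_⟩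
    have hG : Measurable (fun h : ∀ k, Λ k → S k => fun k => h k (φ k)) :=
      measurable_pi_lambda _ fun k => (measurable_pi_apply (φ k)).comp (measurable_pi_apply k)
    rw [Measure.map_map hG hF]
    exact h φ hφ
  · rintro ⟨ν, hν, h⟩
    exact ⟨∀ k, Λ k → S k, inferInstance, ν, hν, fun k lam g => g k lam,
      fun k lam => (measurable_pi_apply lam).comp (measurable_pi_apply k), h⟩
end

section
/- For k = 1,…,n let Λ_k be a nonempty finite set, let S_k be a standard Borel space (with its Borel sigma-algebra), let Φ ⊆ Λ₁ × ⋯ × Λₙ be nonempty, and for each φ ∈ Φ let μ_φ be a probability measure on S₁ × ⋯ × Sₙ. Then the family (μ_φ)_{φ∈Φ} satisfies selective influences if and only if there exist functions f_k : Λ_k × [0,1] → S_k, with f_k(λ, ·) measurable for every λ ∈ Λ_k, such that for every φ = (λ₁,…,λₙ) ∈ Φ the pushforward of the uniform (Lebesgue) probability measure on [0,1] under t ↦ (f₁(λ₁,t),…,fₙ(λₙ,t)) equals μ_φ. That is, the common source of randomness R in the definition of selective influences can always be chosen to be a uniformly distributed random variable on the interval [0,1]. -/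
open MeasureTheory

universe u v

/-- The uniform (Lebesgue) probability measure on the unit interval `[0,1]`,
obtained from Lebesgue measure on `ℝ`. -/
noncomputable def uniform01 : Measure (Set.Icc (0 : ℝ) 1) :=
  Measure.comap Subtype.val volume

/-- With finitely many inputs having finitely many values each and
outputs valued in standard Borel spaces, a family of joint output distributions
satisfies selective influences if and only if the common source of randomness can be
chosen to be a uniformly distributed random variable on `[0,1]`: there are functions
`f k : Λ k × [0,1] → S k`, measurable for each fixed input value, such that the
pushforward of the uniform measure on `[0,1]` under `t ↦ (f₁(λ₁,t),…,fₙ(λₙ,t))`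
equals `μ φ` for every allowable treatment `φ = (λ₁,…,λₙ)`. -/
theorem selective_influences_iff_uniform_source
    {n : ℕ} (Λ : Fin n → Type v) [∀ k, Fintype (Λ k)] [∀ k, Nonempty (Λ k)]
    (S : Fin n → Type u) [∀ k, MeasurableSpace (S k)] [∀ k, StandardBorelSpace (S k)]
    (Φ : Set (∀ k, Λ k)) (hΦ : Φ.Nonempty)
    (μ : (∀ k, Λ k) → Measure (∀ k, S k))
    (hμ : ∀ φ ∈ Φ, IsProbabilityMeasure (μ φ)) :
    (∃ (Ω : Type (max u v)) (_ : MeasurableSpace Ω) (P : Measure Ω),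
      IsProbabilityMeasure P ∧
      ∃ f : ∀ k, Λ k → Ω → S k,
        (∀ k lam, Measurable (f k lam)) ∧
        ∀ φ ∈ Φ, Measure.map (fun ω k => f k (φ k) ω) P = μ φ)
    ↔
    (∃ f : ∀ k, Λ k → Set.Icc (0 : ℝ) 1 → S k,
      (∀ k lam, Measurable (f k lam)) ∧
      ∀ φ ∈ Φ, Measure.map (fun t k => f k (φ k) t) uniform01 = μ φ) := by
  have hvol : uniform01 = (volume : Measure (Set.Icc (0 : ℝ) 1)) := rfl
  have hprob : IsProbabilityMeasure uniform01 := by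
    rw [hvol]; infer_instance
  constructor
  · rintro ⟨Ω, mΩ, P, hP, f, hf, hmap⟩
    have hΩ : Nonempty Ω := P.nonempty_of_neZero
    obtain ⟨ω₀⟩ := hΩ
    let T := ∀ k, Λ k → S k
    let F : Ω → T := fun ω k l => f k l ω
    have hF : Measurable F :=
      measurable_pi_lambda _ fun k => measurable_pi_lambda _ fun l => hf k l
    have hT : Nonempty T := ⟨F ω₀⟩
    have hPT : IsProbabilityMeasure (P.map F) := Measure.isProbabilityMeasure_map hF.aemeasurable
    obtain ⟨g, hg, hgm⟩ := (P.map F).exists_measurable_map_eq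
    refine ⟨fun k l t => g t k l, fun k l => ?_, fun φ hφ => ?_⟩
    · exact (measurable_pi_apply l).comp ((measurable_pi_apply k).comp hg)
    · have hE : Measurable (fun (x : T) k => x k (φ k)) :=
        measurable_pi_lambda _ fun k => (measurable_pi_apply (φ k)).comp (measurable_pi_apply k)
      rw [← hmap φ hφ, hvol]
      change Measure.map ((fun (x : T) k => x k (φ k)) ∘ g) volume
        = Measure.map ((fun (x : T) k => x k (φ k)) ∘ F) P
      rw [← Measure.map_map hE hg, ← Measure.map_map hE hF, hgm]
  · rintro ⟨f, hf, hmap⟩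
    refine ⟨ULift (Set.Icc (0 : ℝ) 1), inferInstance, uniform01.map ULift.up,
      Measure.isProbabilityMeasure_map measurable_up.aemeasurable,
      fun k l t => f k l t.down, fun k l => (hf k l).comp measurable_down, fun φ hφ => ?_⟩
    rw [← hmap φ hφ, Measure.map_map _ measurable_up]
    · rfl
    · exact measurable_pi_lambda _ fun k => (hf k (φ k)).comp measurable_down
end

section
/- (Linear Feasibility Test.) For k = 1,…,n let Λ_k = {1,…,m_k} and S_k = {1,…,v_k} (finite sets with the discrete sigma-algebra), let Φ ⊆ Λ₁ × ⋯ × Λₙ be nonempty, and for each φ ∈ Φ let p_φ : S₁ × ⋯ × Sₙ → ℝ be nonnegative with Σ_a p_φ(a) = 1, defining the probability measure μ_φ on S₁ × ⋯ × Sₙ with μ_φ({a}) = p_φ(a). Then (μ_φ)_{φ∈Φ} satisfies selective influences if and only if there exists a function Q : ∏_{k=1}^n (Λ_k → S_k) → ℝ with Q(h) ≥ 0 for every h and such that for every φ = (λ₁,…,λₙ) ∈ Φ and every a = (a₁,…,aₙ) ∈ S₁ × ⋯ × Sₙ, the sum of Q(h) over all h = (h₁,…,hₙ) with h_k(λ_k)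 = a_k for every k equals p_φ(a). -/
open MeasureTheory

open scoped Classical in
/-- Linear Feasibility Test. With inputs `λ_k ∈ Fin (m k)` and
outputs valued in the finite sets `Fin (v k)` (discrete sigma-algebras), and with the
joint output distribution at treatment `φ ∈ Φ` given by the probability mass function
`p φ`, the family satisfies selective influences if and only if there is a nonnegative
solution `Q` (a probability mass on the reduced coupling space, one coordinate per each
value of each input) to the linear system: for every allowable treatment
`φ = (λ₁,…,λₙ)` and every output vector `a`, the sum of `Q h` over all `h` with
`h k (λ_k) = a k` for every `k` equals `p φ a`. -/
theorem selective_influences_iff_linear_feasibility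
    {n : ℕ} (m v : Fin n → ℕ) (hm : ∀ k, 1 ≤ m k) (hv : ∀ k, 1 ≤ v k)
    (Φ : Set (∀ k, Fin (m k))) (hΦ : Φ.Nonempty)
    (p : (∀ k, Fin (m k)) → (∀ k, Fin (v k)) → ℝ)
    (hp0 : ∀ φ ∈ Φ, ∀ a, 0 ≤ p φ a)
    (hp1 : ∀ φ ∈ Φ, ∑ a : ∀ k, Fin (v k), p φ a = 1)
    (μ : (∀ k, Fin (m k)) → Measure (∀ k, Fin (v k)))
    (hμ : ∀ φ ∈ Φ, ∀ a : ∀ k, Fin (v k), μ φ {a} = ENNReal.ofReal (p φ a)) :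
    (∃ (Ω : Type) (_ : MeasurableSpace Ω) (P : Measure Ω),
      IsProbabilityMeasure P ∧
      ∃ f : ∀ k, Fin (m k) → Ω → Fin (v k),
        (∀ k lam, Measurable (f k lam)) ∧
        ∀ φ ∈ Φ, Measure.map (fun ω k => f k (φ k) ω) P = μ φ)
    ↔
    (∃ Q : (∀ k, Fin (m k) → Fin (v k)) → ℝ,
      (∀ h, 0 ≤ Q h) ∧
      ∀ φ ∈ Φ, ∀ a : ∀ k, Fin (v k),
        (∑ h ∈ Finset.univ.filter
            (fun h : ∀ k, Fin (m k) → Fin (v k) => ∀ k, h k (φ k) = a k), Q h)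
          = p φ a) := by
  constructor
  · rintro ⟨Ω, _, P, hP, f, hf, hmap⟩
    have hF : Measurable (fun ω : Ω => fun k l => f k l ω) :=
      measurable_pi_lambda _ fun k => measurable_pi_lambda _ fun l => hf k l
    refine ⟨fun h => (P.map (fun ω : Ω => fun k l => f k l ω)).real {h},
      fun h => measureReal_nonneg, fun φ hφ a => ?_⟩
    have : IsProbabilityMeasure (P.map (fun ω : Ω => fun k l => f k l ω)) :=
      Measure.isProbabilityMeasure_map hF.aemeasurable
    have hG : Measurable (fun ω : Ω => fun k => f k (φ k) ω) :=
      measurable_pi_lambda _ fun k => hf k _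
    rw [sum_measureReal_singleton, measureReal_def, Measure.map_apply hF (Set.toFinite _).measurableSet]
    have h1 := hμ φ hφ a
    rw [← hmap φ hφ, Measure.map_apply hG (measurableSet_singleton a)] at h1
    have h2 : (fun ω : Ω => fun k l => f k l ω) ⁻¹' (↑(Finset.univ.filter
            (fun h : ∀ k, Fin (m k) → Fin (v k) => ∀ k, h k (φ k) = a k)) :
              Set (∀ k, Fin (m k) → Fin (v k)))
        = (fun ω : Ω => fun k => f k (φ k) ω) ⁻¹' {a} := by
      ext ω
      simp [funext_iff]
    rw [h2, h1, ENNReal.toReal_ofReal (hp0 φ hφ a)]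
  · rintro ⟨Q, hQ0, hQ⟩
    let P : Measure (∀ k, Fin (m k) → Fin (v k)) :=
      ∑ h, ENNReal.ofReal (Q h) • Measure.dirac h
    have hG : ∀ φ : (∀ k, Fin (m k)), Measurable
        (fun (ω : ∀ k, Fin (m k) → Fin (v k)) k => ω k (φ k)) :=
      fun φ => measurable_of_countable _
    have key : ∀ φ ∈ Φ, Measure.map
        (fun (ω : ∀ k, Fin (m k) → Fin (v k)) k => ω k (φ k)) P = μ φ := by
      intro φ hφ
      refine Measure.ext_of_singleton fun a => ?_
      rw [hμ φ hφ, Measure.map_apply (hG φ) (measurableSet_singleton a), ← hQ φ hφ a,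
        ENNReal.ofReal_sum_of_nonneg (fun h _ => hQ0 h), Finset.sum_filter]
      simp only [P, Measure.finset_sum_apply, Measure.smul_apply, smul_eq_mul]
      refine Finset.sum_congr rfl fun h _ => ?_
      rw [Measure.dirac_apply]
      simp [Set.indicator_apply, funext_iff]
    refine ⟨_, _, P, ⟨?_⟩, fun k l ω => ω k l, fun k l => measurable_of_countable _, key⟩
    obtain ⟨φ, hφ⟩ := hΦ
    have h1 : P Set.univ = μ φ Set.univ := by
      rw [← key φ hφ, Measure.map_apply (hG φ) MeasurableSet.univ, Set.preimage_univ]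
    rw [h1, ← Finset.coe_univ, ← sum_measure_singleton,
      Finset.sum_congr rfl fun a _ => hμ φ hφ a,
      ← ENNReal.ofReal_sum_of_nonneg (fun a _ => hp0 φ hφ a), hp1 φ hφ, ENNReal.ofReal_one]
end

section
/- (Complete marginal selectivity.) For k = 1,…,n let Λ_k be a nonempty set, (S_k, 𝔖_k) a measurable space, Φ ⊆ Λ₁ × ⋯ × Λₙ nonempty, and (μ_φ)_{φ∈Φ} a family of probability measures on S₁ × ⋯ × Sₙ satisfying selective influences. Then for every subset I ⊆ {1,…,n} and all treatments φ, φ' ∈ Φ such that φ_k = φ'_k for every k ∈ I, the pushforwards of μ_φ and of μ_{φ'} under the projection (a₁,…,aₙ) ↦ (a_k)_{k∈I} coincide. In particular (simple marginal selectivity), the distribution of the k-th output depends only on the value of the k-th input. -/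
open MeasureTheory

universe u v

/-- Complete marginal selectivity. If a family `(μ φ)_{φ ∈ Φ}` of
joint output distributions satisfies selective influences, then for every subset `I` of
output indices and all allowable treatments `φ, φ'` agreeing on the inputs with indices
in `I`, the pushforwards of `μ φ` and `μ φ'` under the projection onto the coordinates
in `I` coincide. In particular (simple marginal selectivity) the distribution of the
`k`-th output depends only on the value of the `k`-th input. -/
theorem complete_marginal_selectivity
    {n : ℕ} (Λ : Fin n → Type u) [∀ k, Nonempty (Λ k)]
    (S : Fin n → Type v) [∀ k, MeasurableSpace (S k)]
    (Φ : Set (∀ k, Λ k)) (hΦ : Φ.Nonempty)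
    (μ : (∀ k, Λ k) → Measure (∀ k, S k))
    (hsel : ∃ (Ω : Type (max u v)) (_ : MeasurableSpace Ω) (P : Measure Ω),
      IsProbabilityMeasure P ∧
      ∃ f : ∀ k, Λ k → Ω → S k,
        (∀ k lam, Measurable (f k lam)) ∧
        ∀ φ ∈ Φ, Measure.map (fun ω k => f k (φ k) ω) P = μ φ) :
    (∀ (I : Set (Fin n)), ∀ φ ∈ Φ, ∀ φ' ∈ Φ, (∀ k ∈ I, φ k = φ' k) →
      Measure.map (fun a : ∀ k, S k => fun k : I => a k) (μ φ)
        = Measure.map (fun a : ∀ k, S k => fun k : I => a k) (μ φ'))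
    ∧
    (∀ (k : Fin n), ∀ φ ∈ Φ, ∀ φ' ∈ Φ, φ k = φ' k →
      Measure.map (fun a : ∀ k, S k => a k) (μ φ)
        = Measure.map (fun a : ∀ k, S k => a k) (μ φ')) := by
  obtain ⟨Ω, _, P, _, f, hf, h⟩ := hsel
  have hm : ∀ φ : ∀ k, Λ k, Measurable (fun ω k => f k (φ k) ω) :=
    fun φ => measurable_pi_lambda _ fun k => hf k (φ k)
  refine ⟨fun I φ hφ φ' hφ' hI => ?_, fun k φ hφ φ' hφ' hk => ?_⟩
  · have hp : Measurable (fun a : ∀ k, S k => fun k : I => a k) :=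
      measurable_pi_lambda _ fun k => measurable_pi_apply _
    rw [← h φ hφ, ← h φ' hφ', Measure.map_map hp (hm φ), Measure.map_map hp (hm φ')]
    congr 1
    funext ω k
    simp only [Function.comp_apply]
    rw [hI k k.2]
  · have hp : Measurable (fun a : ∀ k, S k => a k) := measurable_pi_apply _
    rw [← h φ hφ, ← h φ' hφ', Measure.map_map hp (hm φ), Measure.map_map hp (hm φ')]
    congr 1
    funext ω
    simp only [Function.comp_apply]
    rw [hk]
end

section
/- (Invariance under input-value-specific transformations.) For k = 1,…,n let Λ_k be a nonempty set, (S_k, 𝔖_k) and (T_k, 𝔗_k) measurable spaces, Φ ⊆ Λ₁ × ⋯ × Λₙ nonempty, and suppose the family (μ_φ)_{φ∈Φ} of probability measures on S₁ × ⋯ × Sₙ satisfies selective influences. For each k let g_k : Λ_k × S_k → T_k be a function with g_k(λ, ·) measurable for every λ ∈ Λ_k. Define, for each φ = (λ₁,…,λₙ) ∈ Φ, the probability measure ν_φ on T₁ × ⋯ × Tₙ as the pushforward of μ_φ under (a₁,…,aₙ) ↦ (g₁(λ₁,a₁),…,gₙ(λₙ,aₙ)). Then the family (ν_φ)_{φ∈Φ}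 also satisfies selective influences (with the same inputs and allowable treatments). -/
open MeasureTheory

universe u v w

/-- Invariance under input-value-specific transformations. If the
family `(μ φ)_{φ ∈ Φ}` of joint output distributions satisfies selective influences and
`g k : Λ k × S k → T k` are functions measurable in the second argument, then the
transformed family `(ν φ)_{φ ∈ Φ}`, where `ν φ` is the pushforward of `μ φ` under
`(a₁,…,aₙ) ↦ (g₁(λ₁,a₁),…,gₙ(λₙ,aₙ))` for `φ = (λ₁,…,λₙ)`, also satisfies selective
influences with the same inputs and allowable treatments. -/
theorem selective_influences_invariant_under_input_specific_transformations
    {n : ℕ} (Λ : Fin n → Type u) [∀ k, Nonempty (Λ k)]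
    (S : Fin n → Type v) [∀ k, MeasurableSpace (S k)]
    (T : Fin n → Type w) [∀ k, MeasurableSpace (T k)]
    (Φ : Set (∀ k, Λ k)) (hΦ : Φ.Nonempty)
    (μ : (∀ k, Λ k) → Measure (∀ k, S k))
    (hsel : ∃ (Ω : Type (max u v)) (_ : MeasurableSpace Ω) (P : Measure Ω),
      IsProbabilityMeasure P ∧
      ∃ f : ∀ k, Λ k → Ω → S k,
        (∀ k lam, Measurable (f k lam)) ∧
        ∀ φ ∈ Φ, Measure.map (fun ω k => f k (φ k) ω) P = μ φ)
    (g : ∀ k, Λ k → S k → T k)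
    (hg : ∀ k lam, Measurable (g k lam))
    (ν : (∀ k, Λ k) → Measure (∀ k, T k))
    (hν : ∀ φ ∈ Φ,
      ν φ = Measure.map (fun a : ∀ k, S k => fun k => g k (φ k) (a k)) (μ φ)) :
    ∃ (Ω : Type (max u v)) (_ : MeasurableSpace Ω) (P : Measure Ω),
      IsProbabilityMeasure P ∧
      ∃ f : ∀ k, Λ k → Ω → T k,
        (∀ k lam, Measurable (f k lam)) ∧
        ∀ φ ∈ Φ, Measure.map (fun ω k => f k (φ k) ω) P = ν φ := by
  obtain ⟨Ω, mΩ, P, hP, f, hf, hmap⟩ := hsel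
  refine ⟨Ω, mΩ, P, hP, fun k lam ω => g k lam (f k lam ω),
    fun k lam => (hg k lam).comp (hf k lam), fun φ hφ => ?_⟩
  rw [hν φ hφ, ← hmap φ hφ, Measure.map_map]
  · rfl
  · exact measurable_pi_lambda _ fun k => (hg k (φ k)).comp (measurable_pi_apply k)
  · exact measurable_pi_lambda _ fun k => hf k (φ k)
end

section
/- (Common and specific sources of variability.) For k = 1,…,n let Λ_k be a nonempty set, (S_k, 𝔖_k) a measurable space, Φ ⊆ Λ₁ × ⋯ × Λₙ nonempty, and (μ_φ)_{φ∈Φ} a family of probability measures on S₁ × ⋯ × Sₙ. Then (μ_φ)_{φ∈Φ} satisfies selective influences if and only if there exist probability spaces (Ω₀, 𝔉₀, P₀), (Ω₁, 𝔉₁, P₁), …, (Ωₙ, 𝔉ₙ, Pₙ) and functions w_k : Λ_k × Ω₀ × Ω_k → S_k, with w_k(λ, ·, ·) jointly measurable for every λ ∈ Λ_k, such that for every φ = (λ₁,…,λₙ) ∈ Φ the pushforward of the product measure P₀ ⊗ P₁ ⊗ ⋯ ⊗ Pₙ on Ω₀ × Ω₁ × ⋯ × Ωₙ under (ω₀, ω₁,…,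 ωₙ) ↦ (w₁(λ₁, ω₀, ω₁),…, wₙ(λₙ, ω₀, ωₙ)) equals μ_φ. (Ω₀ plays the role of a common source of variability and Ω₁,…,Ωₙ of stochastically independent sources specific to the respective outputs.) -/
open MeasureTheory

universe u v

/-- Common and specific sources of variability. A family
`(μ φ)_{φ ∈ Φ}` of joint output distributions satisfies selective influences if and
only if there exist a probability space `Ω₀` (common source of variability),
stochastically independent probability spaces `Ω₁,…,Ωₙ` (sources specific to the
respective outputs) and functions `w k : Λ k × Ω₀ × Ω k → S k`, jointly measurable in
the last two arguments for every fixed input value, such that for every allowable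
treatment `φ = (λ₁,…,λₙ)` the pushforward of the product measure `P₀ ⊗ P₁ ⊗ ⋯ ⊗ Pₙ`
under `(ω₀,ω₁,…,ωₙ) ↦ (w₁(λ₁,ω₀,ω₁),…,wₙ(λₙ,ω₀,ωₙ))` equals `μ φ`. -/
theorem selective_influences_iff_common_and_specific_sources
    {n : ℕ} (Λ : Fin n → Type u) [∀ k, Nonempty (Λ k)]
    (S : Fin n → Type v) [∀ k, MeasurableSpace (S k)]
    (Φ : Set (∀ k, Λ k)) (hΦ : Φ.Nonempty)
    (μ : (∀ k, Λ k) → Measure (∀ k, S k))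
    (hμ : ∀ φ ∈ Φ, IsProbabilityMeasure (μ φ)) :
    (∃ (Ω : Type (max u v)) (_ : MeasurableSpace Ω) (P : Measure Ω),
      IsProbabilityMeasure P ∧
      ∃ f : ∀ k, Λ k → Ω → S k,
        (∀ k lam, Measurable (f k lam)) ∧
        ∀ φ ∈ Φ, Measure.map (fun ω k => f k (φ k) ω) P = μ φ)
    ↔
    (∃ (Ω₀ : Type (max u v)) (_ : MeasurableSpace Ω₀) (P₀ : Measure Ω₀),
      IsProbabilityMeasure P₀ ∧
      ∃ (Ωs : Fin n → Type (max u v)) (_ : ∀ k, MeasurableSpace (Ωs k))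
        (Ps : ∀ k, Measure (Ωs k)),
        (∀ k, IsProbabilityMeasure (Ps k)) ∧
        ∃ w : ∀ k, Λ k → Ω₀ × Ωs k → S k,
          (∀ k lam, Measurable (w k lam)) ∧
          ∀ φ ∈ Φ,
            Measure.map
              (fun q : Ω₀ × (∀ k, Ωs k) => fun k => w k (φ k) (q.1, q.2 k))
              (P₀.prod (Measure.pi Ps)) = μ φ) := by
  constructor
  · rintro ⟨Ω, mΩ, P, hP, f, hf, h⟩
    refine ⟨Ω, mΩ, P, hP, fun _ => PUnit, fun _ => inferInstance,
      fun _ => Measure.dirac PUnit.unit, fun _ => inferInstance,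
      fun k lam q => f k lam q.1, fun k lam => (hf k lam).comp measurable_fst, ?_⟩
    intro φ hφ
    have hm : Measurable (fun ω k => f k (φ k) ω) :=
      measurable_pi_lambda _ fun k => hf k (φ k)
    have hfst : Measure.map Prod.fst
        (P.prod (Measure.pi (fun _ : Fin n => Measure.dirac PUnit.unit))) = P := by
      rw [Measure.map_fst_prod]
      simp
    rw [← h φ hφ]
    conv_rhs => rw [← hfst]
    rw [Measure.map_map hm measurable_fst]
    rfl
  · rintro ⟨Ω₀, m₀, P₀, hP₀, Ωs, ms, Ps, hPs, w, hw, h⟩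
    refine ⟨Ω₀ × (∀ k, Ωs k), inferInstance, P₀.prod (Measure.pi Ps), inferInstance,
      fun k lam q => w k lam (q.1, q.2 k), fun k lam => ?_, h⟩
    exact (hw k lam).comp (measurable_fst.prodMk ((measurable_pi_apply k).comp measurable_snd))
end

section
/- (Distance test: chain inequality for treatment-realizable sequences.) For k = 1,…,n let Λ_k be a nonempty set, let S be a measurable space serving as the common set of values of all outputs, let Φ ⊆ Λ₁ × ⋯ × Λₙ be nonempty, and suppose the family (μ_φ)_{φ∈Φ} of probability measures on Sⁿ satisfies selective influences. Let D : S × S → ℝ be a nonnegative measurable function with D(x,x) = 0 and D(x,y) + D(y,z) ≥ D(x,z) for all x, y, z ∈ S, and assume all the integrals below are finite. Let l ≥ 3, let k₁,…,k_l ∈ {1,…,n} with k₁ ≠ k_l and k_{i−1} ≠ k_i for i = 2,…,l, let j_i ∈ Λ_{k_i} for each i, let ψ ∈ Φ satisfy ψ_{k₁} = j₁ and ψ_{k_l} = j_l, and for each i = 2,…,l let φ^i ∈ Φ satisfy φ^i_{k_{i−1}} = j_{i−1} and φ^i_{k_i} = j_i. Then ∫ D(a_{k₁}, a_{k_l}) dμ_ψ(a)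 ≤ Σ_{i=2}^{l} ∫ D(a_{k_{i−1}}, a_{k_i}) dμ_{φ^i}(a). -/
open MeasureTheory

universe u v

/-- Distance test: chain inequality for treatment-realizable
sequences. Suppose the family `(μ φ)_{φ ∈ Φ}` of joint distributions of `n` outputs
with a common value space `S` satisfies selective influences, and `D` is a measurable
pseudo-quasi-metric on `S`. For any treatment-realizable sequence of input values
`λ^{k 1} = j 1, …, λ^{k l} = j l` (`l ≥ 3`, with `k 1 ≠ k l` and consecutive indices
distinct), witnessed by an allowable treatment `ψ` containing the first and last values
and allowable treatments `φ i` containing each consecutive pair, and assuming all the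
integrals involved are finite, the chain inequality holds:
`∫ D(a_{k 1}, a_{k l}) dμ_ψ ≤ Σ_{i=2}^{l} ∫ D(a_{k (i-1)}, a_{k i}) dμ_{φ i}`. -/
theorem distance_test_chain_inequality
    {n : ℕ} (Λ : Fin n → Type u) [∀ k, Nonempty (Λ k)]
    {S : Type v} [MeasurableSpace S]
    (Φ : Set (∀ k, Λ k)) (hΦ : Φ.Nonempty)
    (μ : (∀ k, Λ k) → Measure (Fin n → S))
    (hsel : ∃ (Ω : Type (max u v)) (_ : MeasurableSpace Ω) (P : Measure Ω),
      IsProbabilityMeasure P ∧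
      ∃ f : ∀ k, Λ k → Ω → S,
        (∀ k lam, Measurable (f k lam)) ∧
        ∀ φ ∈ Φ, Measure.map (fun ω k => f k (φ k) ω) P = μ φ)
    (D : S → S → ℝ)
    (hDmeas : Measurable fun q : S × S => D q.1 q.2)
    (hDnonneg : ∀ x y, 0 ≤ D x y)
    (hDzero : ∀ x, D x x = 0)
    (hDtriangle : ∀ x y z, D x z ≤ D x y + D y z)
    (l : ℕ) (hl : 3 ≤ l)
    (k : ℕ → Fin n)
    (hkends : k 1 ≠ k l)
    (hkcons : ∀ i, 2 ≤ i → i ≤ l → k (i - 1) ≠ k i)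
    (j : ∀ i : ℕ, Λ (k i))
    (ψ : ∀ k', Λ k') (hψΦ : ψ ∈ Φ)
    (hψ1 : ψ (k 1) = j 1) (hψl : ψ (k l) = j l)
    (φ : ℕ → ∀ k', Λ k')
    (hφΦ : ∀ i, 2 ≤ i → i ≤ l → φ i ∈ Φ)
    (hφprev : ∀ i, 2 ≤ i → i ≤ l → φ i (k (i - 1)) = j (i - 1))
    (hφcur : ∀ i, 2 ≤ i → i ≤ l → φ i (k i) = j i)
    (hint0 : Integrable (fun a : Fin n → S => D (a (k 1)) (a (k l))) (μ ψ))
    (hint : ∀ i, 2 ≤ i → i ≤ l →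
      Integrable (fun a : Fin n → S => D (a (k (i - 1))) (a (k i))) (μ (φ i))) :
    (∫ a, D (a (k 1)) (a (k l)) ∂μ ψ) ≤
      ∑ i ∈ Finset.Icc 2 l, ∫ a, D (a (k (i - 1))) (a (k i)) ∂μ (φ i) := by
  obtain ⟨Ω, _, P, hP, f, hf, hmap⟩ := hsel
  have hmeasφ : ∀ χ : (∀ k, Λ k), Measurable (fun ω k => f k (χ k) ω) := fun χ =>
    measurable_pi_lambda _ (fun k => hf k (χ k))
  have hmD : ∀ p q : Fin n, Measurable (fun a : Fin n → S => D (a p) (a q)) := fun p q =>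
    hDmeas.comp (f := fun a : Fin n → S => (a p, a q)) ((measurable_pi_apply p).prodMk (measurable_pi_apply q))
  have hI0 : ∫ a, D (a (k 1)) (a (k l)) ∂μ ψ
      = ∫ ω, D (f (k 1) (j 1) ω) (f (k l) (j l) ω) ∂P := by
    rw [← hmap ψ hψΦ, integral_map (hmeasφ ψ).aemeasurable (hmD _ _).aestronglyMeasurable]
    simp only [hψ1, hψl]
  have hI : ∀ i, 2 ≤ i → i ≤ l → ∫ a, D (a (k (i - 1))) (a (k i)) ∂μ (φ i)
      = ∫ ω, D (f (k (i - 1)) (j (i - 1)) ω) (f (k i) (j i) ω) ∂P := by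
    intro i h2 hil
    rw [← hmap _ (hφΦ i h2 hil),
      integral_map (hmeasφ _).aemeasurable (hmD _ _).aestronglyMeasurable]
    simp only [hφprev i h2 hil, hφcur i h2 hil]
  have hInt0 : Integrable (fun ω => D (f (k 1) (j 1) ω) (f (k l) (j l) ω)) P := by
    rw [← hmap ψ hψΦ, integrable_map_measure (hmD _ _).aestronglyMeasurable
      (hmeasφ ψ).aemeasurable] at hint0
    simpa only [Function.comp_def, hψ1, hψl] using hint0
  have hInt : ∀ i, 2 ≤ i → i ≤ l →
      Integrable (fun ω => D (f (k (i - 1)) (j (i - 1)) ω) (f (k i) (j i) ω)) P := by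
    intro i h2 hil
    have h := hint i h2 hil
    rw [← hmap _ (hφΦ i h2 hil), integrable_map_measure (hmD _ _).aestronglyMeasurable
      (hmeasφ _).aemeasurable] at h
    simpa only [Function.comp_def, hφprev i h2 hil, hφcur i h2 hil] using h
  have hpt : ∀ X : ℕ → S, ∀ m, 1 ≤ m →
      D (X 1) (X m) ≤ ∑ i ∈ Finset.Icc 2 m, D (X (i - 1)) (X i) := by
    intro X m hm
    induction m, hm using Nat.le_induction with
    | base => simp [hDzero]
    | succ m hm ih =>
      rw [Finset.sum_Icc_succ_top (by omega)]
      have h := hDtriangle (X 1) (X m) (X (m + 1))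
      simp only [Nat.add_sub_cancel]
      linarith
  rw [hI0, Finset.sum_congr rfl (fun i hi => hI i (Finset.mem_Icc.1 hi).1 (Finset.mem_Icc.1 hi).2),
    ← integral_finsetSum _ (fun i hi => hInt i (Finset.mem_Icc.1 hi).1 (Finset.mem_Icc.1 hi).2)]
  refine integral_mono hInt0 (integrable_finsetSum _
    (fun i hi => hInt i (Finset.mem_Icc.1 hi).1 (Finset.mem_Icc.1 hi).2)) ?_
  intro ω
  exact hpt (fun i => f (k i) (j i) ω) l (by omega)
end

section
/- (Geometric characterization of the cosphericity inequality.) Let ρ₁₁, ρ₁₂, ρ₂₁, ρ₂₂ be real numbers in [−1, 1]. Then |ρ₁₁ρ₁₂ − ρ₂₁ρ₂₂| ≤ √(1 − ρ₁₁²)·√(1 − ρ₁₂²) + √(1 − ρ₂₁²)·√(1 − ρ₂₂²) holds if and only if there exist unit vectors A₁, A₂, B₁, B₂ in three-dimensional Euclidean space ℝ³ such that ⟨A₁, B₁⟩ = ρ₁₁, ⟨A₁, B₂⟩ = ρ₁₂, ⟨A₂, B₁⟩ = ρ₂₁, and ⟨A₂, B₂⟩ = ρ₂₂, where ⟨·,·⟩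 denotes the standard inner product. -/
open scoped RealInnerProductSpace

lemma cos_aux_rev (A B C : EuclideanSpace ℝ (Fin 3)) (hA : ‖A‖ = 1) (hB : ‖B‖ = 1)
    (hC : ‖C‖ = 1) :
    |⟪B, C⟫ - ⟪A, B⟫ * ⟪A, C⟫| ≤ Real.sqrt (1 - ⟪A, B⟫ ^ 2) * Real.sqrt (1 - ⟪A, C⟫ ^ 2) := by
  have key : ∀ X Y : EuclideanSpace ℝ (Fin 3),
      ⟪X - ⟪A, X⟫ • A, Y - ⟪A, Y⟫ • A⟫ = ⟪X, Y⟫ - ⟪A, X⟫ * ⟪A, Y⟫ := by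
    intro X Y
    have hAA : ⟪A, A⟫ = (1 : ℝ) := by rw [real_inner_self_eq_norm_sq, hA]; norm_num
    simp only [inner_sub_left, inner_sub_right, real_inner_smul_left, real_inner_smul_right, hAA]
    rw [real_inner_comm A X]
    ring
  have hn : ∀ X : EuclideanSpace ℝ (Fin 3), ‖X‖ = 1 →
      ‖X - ⟪A, X⟫ • A‖ = Real.sqrt (1 - ⟪A, X⟫ ^ 2) := by
    intro X hX
    rw [norm_eq_sqrt_real_inner, key, real_inner_self_eq_norm_sq, hX]
    ring_nf
  rw [← key, ← hn B hB, ← hn C hC]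
  exact abs_real_inner_le_norm _ _

lemma cos_aux_fwd (a b c : ℝ) (hc : c ^ 2 ≤ 1)
    (h : (c - a * b) ^ 2 ≤ (1 - a ^ 2) * (1 - b ^ 2)) (ha : a ^ 2 ≤ 1) :
    ∃ y z : ℝ, a ^ 2 + y ^ 2 + z ^ 2 = 1 ∧ a * c + y * Real.sqrt (1 - c ^ 2) = b := by
  have hd : Real.sqrt (1 - c ^ 2) ^ 2 = 1 - c ^ 2 := Real.sq_sqrt (by linarith)
  set d := Real.sqrt (1 - c ^ 2)
  by_cases h0 : d = 0
  · refine ⟨0, Real.sqrt (1 - a ^ 2), ?_, ?_⟩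
    · rw [Real.sq_sqrt (by linarith)]; ring
    · have hc1 : c ^ 2 = 1 := by rw [h0] at hd; linarith
      have : (b - a * c) ^ 2 = 0 := le_antisymm (by nlinarith) (sq_nonneg _)
      have := pow_eq_zero_iff (two_ne_zero) |>.1 this
      linarith
  · have hz : 0 ≤ 1 - a ^ 2 - ((b - a * c) / d) ^ 2 := by
      have hp : 0 < d ^ 2 := by positivity
      rw [div_pow, sub_nonneg, div_le_iff₀ hp, hd]
      nlinarith
    refine ⟨(b - a * c) / d, Real.sqrt (1 - a ^ 2 - ((b - a * c) / d) ^ 2), ?_, ?_⟩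
    · rw [Real.sq_sqrt hz]; ring
    · field_simp; ring

lemma cos_aux_sq (a b c : ℝ) (ha : a ^ 2 ≤ 1) (hb : b ^ 2 ≤ 1)
    (h : |c - a * b| ≤ Real.sqrt (1 - a ^ 2) * Real.sqrt (1 - b ^ 2)) :
    (c - a * b) ^ 2 ≤ (1 - a ^ 2) * (1 - b ^ 2) ∧ c ^ 2 ≤ 1 := by
  have h1 : (c - a * b) ^ 2 ≤ (1 - a ^ 2) * (1 - b ^ 2) := by
    have := pow_le_pow_left₀ (abs_nonneg _) h 2
    rwa [sq_abs, mul_pow, Real.sq_sqrt (by linarith), Real.sq_sqrt (by linarith)] at this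
  refine ⟨h1, ?_⟩
  rw [← Real.sqrt_mul (by linarith)] at h
  have h2 : Real.sqrt ((1 - a ^ 2) * (1 - b ^ 2)) ≤ 1 - |a * b| := by
    have : |a * b| ≤ 1 := by
      rw [abs_le_one_iff_mul_self_le_one]; nlinarith [sq_nonneg a, sq_nonneg b]
    apply Real.sqrt_le_iff.2 ⟨by linarith, ?_⟩
    rw [abs_mul] at *
    nlinarith [sq_nonneg (|a| - |b|), sq_abs a, sq_abs b]
  have h3 : |c| ≤ 1 := by
    have := abs_add_le (c - a * b) (a * b)
    rw [sub_add_cancel] at this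
    linarith
  exact (sq_le_one_iff_abs_le_one c).2 h3

/-- Geometric characterization of the cosphericity inequality.
For reals `ρ₁₁, ρ₁₂, ρ₂₁, ρ₂₂ ∈ [−1,1]`, the cosphericity inequality
`|ρ₁₁ρ₁₂ − ρ₂₁ρ₂₂| ≤ √(1 − ρ₁₁²)√(1 − ρ₁₂²) + √(1 − ρ₂₁²)√(1 − ρ₂₂²)` holds if and
only if there exist unit vectors `A₁, A₂, B₁, B₂` in three-dimensional Euclidean space
whose pairwise inner products realize the given numbers:
`⟪A₁,B₁⟫ = ρ₁₁`, `⟪A₁,B₂⟫ = ρ₁₂`, `⟪A₂,B₁⟫ = ρ₂₁`, `⟪A₂,B₂⟫ = ρ₂₂`. -/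
theorem cosphericity_iff_unit_vectors
    (ρ₁₁ ρ₁₂ ρ₂₁ ρ₂₂ : ℝ)
    (h₁₁ : ρ₁₁ ∈ Set.Icc (-1 : ℝ) 1) (h₁₂ : ρ₁₂ ∈ Set.Icc (-1 : ℝ) 1)
    (h₂₁ : ρ₂₁ ∈ Set.Icc (-1 : ℝ) 1) (h₂₂ : ρ₂₂ ∈ Set.Icc (-1 : ℝ) 1) :
    (|ρ₁₁ * ρ₁₂ - ρ₂₁ * ρ₂₂| ≤
        Real.sqrt (1 - ρ₁₁ ^ 2) * Real.sqrt (1 - ρ₁₂ ^ 2) +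
          Real.sqrt (1 - ρ₂₁ ^ 2) * Real.sqrt (1 - ρ₂₂ ^ 2))
    ↔
    ∃ A₁ A₂ B₁ B₂ : EuclideanSpace ℝ (Fin 3),
      ‖A₁‖ = 1 ∧ ‖A₂‖ = 1 ∧ ‖B₁‖ = 1 ∧ ‖B₂‖ = 1 ∧
      ⟪A₁, B₁⟫ = ρ₁₁ ∧ ⟪A₁, B₂⟫ = ρ₁₂ ∧ ⟪A₂, B₁⟫ = ρ₂₁ ∧ ⟪A₂, B₂⟫ = ρ₂₂ := by
  have e : ∀ x : ℝ, x ∈ Set.Icc (-1 : ℝ) 1 → x ^ 2 ≤ 1 := fun x hx => by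
    nlinarith [hx.1, hx.2]
  have k11 := e _ h₁₁
  have k12 := e _ h₁₂
  have k21 := e _ h₂₁
  have k22 := e _ h₂₂
  constructor
  · intro h
    obtain ⟨c, hc1, hc2⟩ : ∃ c : ℝ,
        |c - ρ₁₁ * ρ₁₂| ≤ Real.sqrt (1 - ρ₁₁ ^ 2) * Real.sqrt (1 - ρ₁₂ ^ 2) ∧
        |c - ρ₂₁ * ρ₂₂| ≤ Real.sqrt (1 - ρ₂₁ ^ 2) * Real.sqrt (1 - ρ₂₂ ^ 2) := by
      have hs : 0 ≤ Real.sqrt (1 - ρ₁₁ ^ 2) * Real.sqrt (1 - ρ₁₂ ^ 2) := by positivity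
      have ht : 0 ≤ Real.sqrt (1 - ρ₂₁ ^ 2) * Real.sqrt (1 - ρ₂₂ ^ 2) := by positivity
      generalize Real.sqrt (1 - ρ₁₁ ^ 2) * Real.sqrt (1 - ρ₁₂ ^ 2) = s at *
      generalize Real.sqrt (1 - ρ₂₁ ^ 2) * Real.sqrt (1 - ρ₂₂ ^ 2) = t at *
      generalize ρ₁₁ * ρ₁₂ = p at *
      generalize ρ₂₁ * ρ₂₂ = q at *
      rw [abs_le] at h
      refine ⟨max (p - s) (q - t), ?_, ?_⟩ <;> rw [abs_le] <;>
        rcases max_cases (p - s) (q - t) with ⟨h1, h2⟩ | ⟨h1, h2⟩ <;> rw [h1] <;>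
        constructor <;> linarith [h.1, h.2]
    obtain ⟨g1, hc⟩ := cos_aux_sq _ _ _ k11 k12 hc1
    obtain ⟨g2, -⟩ := cos_aux_sq _ _ _ k21 k22 hc2
    obtain ⟨y, z, n1, i1⟩ := cos_aux_fwd _ _ _ hc g1 k11
    obtain ⟨y', z', n2, i2⟩ := cos_aux_fwd _ _ _ hc g2 k21
    refine ⟨!₂[ρ₁₁, y, z], !₂[ρ₂₁, y', z'], !₂[1, 0, 0], !₂[c, Real.sqrt (1 - c ^ 2), 0],
      ?_, ?_, ?_, ?_, ?_, ?_, ?_, ?_⟩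
    · simp [EuclideanSpace.norm_eq, Fin.sum_univ_three, n1]
    · simp [EuclideanSpace.norm_eq, Fin.sum_univ_three, n2]
    · simp [EuclideanSpace.norm_eq, Fin.sum_univ_three]
    · have : Real.sqrt (1 - c ^ 2) ^ 2 = 1 - c ^ 2 := Real.sq_sqrt (by linarith)
      simp [EuclideanSpace.norm_eq, Fin.sum_univ_three, this]
    · simp [PiLp.inner_apply, Fin.sum_univ_three]
    · simp [PiLp.inner_apply, Fin.sum_univ_three]; linarith
    · simp [PiLp.inner_apply, Fin.sum_univ_three]
    · simp [PiLp.inner_apply, Fin.sum_univ_three]; linarith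
  · rintro ⟨A₁, A₂, B₁, B₂, hA1, hA2, hB1, hB2, rfl, rfl, rfl, rfl⟩
    have r1 := cos_aux_rev A₁ B₁ B₂ hA1 hB1 hB2
    have r2 := cos_aux_rev A₂ B₁ B₂ hA2 hB1 hB2
    rw [abs_le] at *
    constructor <;> linarith [r1.1, r1.2, r2.1, r2.2]
end

section
/- (Interaction contrast for the parallel-OR (minimum) architecture.) Let (Ω, 𝔉, P) be a probability space and let A₁, A₂, B₁, B₂ : Ω → ℝ be measurable functions satisfying the prolongation constraints A₁(ω) ≤ A₂(ω) and B₁(ω) ≤ B₂(ω) for every ω ∈ Ω. Define T_{ij} = min(A_i, B_j) for i, j ∈ {1,2}. Then for every real t, P(T₁₁ ≤ t) + P(T₂₂ ≤ t) − P(T₁₂ ≤ t) − P(T₂₁ ≤ t) ≤ 0. -/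
open MeasureTheory

universe u

/-- Interaction contrast for the parallel-OR (minimum) architecture.
If the process durations `A₁, A₂, B₁, B₂` on a common probability space satisfy the
prolongation constraints `A₁ ≤ A₂` and `B₁ ≤ B₂` pointwise, and the response times are
`T_{ij} = min(A_i, B_j)`, then the interaction contrast
`c(t) = P(T₁₁ ≤ t) + P(T₂₂ ≤ t) − P(T₁₂ ≤ t) − P(T₂₁ ≤ t)` is nonpositive for every
real `t`. -/
theorem interaction_contrast_parallel_or
    {Ω : Type u} [MeasurableSpace Ω] (P : Measure Ω) [IsProbabilityMeasure P]
    (A₁ A₂ B₁ B₂ : Ω → ℝ)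
    (hA₁ : Measurable A₁) (hA₂ : Measurable A₂)
    (hB₁ : Measurable B₁) (hB₂ : Measurable B₂)
    (hA : ∀ ω, A₁ ω ≤ A₂ ω) (hB : ∀ ω, B₁ ω ≤ B₂ ω) (t : ℝ) :
    (P {ω | min (A₁ ω) (B₁ ω) ≤ t}).toReal + (P {ω | min (A₂ ω) (B₂ ω) ≤ t}).toReal -
        (P {ω | min (A₁ ω) (B₂ ω) ≤ t}).toReal -
        (P {ω | min (A₂ ω) (B₁ ω) ≤ t}).toReal ≤ 0 := by
  have hm : MeasurableSet {ω | min (A₂ ω) (B₁ ω) ≤ t} :=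
    measurableSet_le (hA₂.min hB₁) measurable_const
  have key := measureReal_union_add_inter (μ := P)
    (s := {ω | min (A₁ ω) (B₂ ω) ≤ t}) hm
  have h1 : P.real {ω | min (A₁ ω) (B₁ ω) ≤ t} ≤
      P.real ({ω | min (A₁ ω) (B₂ ω) ≤ t} ∪ {ω | min (A₂ ω) (B₁ ω) ≤ t}) := by
    refine measureReal_mono ?_ (measure_ne_top P _)
    intro ω h
    simp only [Set.mem_union, Set.mem_ofPred_eq, min_le_iff] at h ⊢
    tauto
  have h2 : P.real {ω | min (A₂ ω) (B₂ ω) ≤ t} ≤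
      P.real ({ω | min (A₁ ω) (B₂ ω) ≤ t} ∩ {ω | min (A₂ ω) (B₁ ω) ≤ t}) := by
    refine measureReal_mono ?_ (measure_ne_top P _)
    intro ω h
    exact ⟨(min_le_min (hA ω) le_rfl).trans h, (min_le_min le_rfl (hB ω)).trans h⟩
  simp only [Measure.real] at key h1 h2
  linarith
end

section
/- (Interaction contrast for the parallel-AND (maximum) architecture.) Let (Ω, 𝔉, P) be a probability space and let A₁, A₂, B₁, B₂ : Ω → ℝ be measurable functions satisfying the prolongation constraints A₁(ω) ≤ A₂(ω) and B₁(ω) ≤ B₂(ω) for every ω ∈ Ω. Define T_{ij} = max(A_i, B_j) for i, j ∈ {1,2}. Then for every real t, P(T₁₁ ≤ t) + P(T₂₂ ≤ t) − P(T₁₂ ≤ t) − P(T₂₁ ≤ t) ≥ 0. -/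
open MeasureTheory

universe u

/-- Interaction contrast for the parallel-AND (maximum) architecture.
If the process durations `A₁, A₂, B₁, B₂` on a common probability space satisfy the
prolongation constraints `A₁ ≤ A₂` and `B₁ ≤ B₂` pointwise, and the response times are
`T_{ij} = max(A_i, B_j)`, then the interaction contrast
`c(t) = P(T₁₁ ≤ t) + P(T₂₂ ≤ t) − P(T₁₂ ≤ t) − P(T₂₁ ≤ t)` is nonnegative for every
real `t`. -/
theorem interaction_contrast_parallel_and
    {Ω : Type u} [MeasurableSpace Ω] (P : Measure Ω) [IsProbabilityMeasure P]
    (A₁ A₂ B₁ B₂ : Ω → ℝ)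
    (hA₁ : Measurable A₁) (hA₂ : Measurable A₂)
    (hB₁ : Measurable B₁) (hB₂ : Measurable B₂)
    (hA : ∀ ω, A₁ ω ≤ A₂ ω) (hB : ∀ ω, B₁ ω ≤ B₂ ω) (t : ℝ) :
    0 ≤ (P {ω | max (A₁ ω) (B₁ ω) ≤ t}).toReal + (P {ω | max (A₂ ω) (B₂ ω) ≤ t}).toReal -
        (P {ω | max (A₁ ω) (B₂ ω) ≤ t}).toReal -
        (P {ω | max (A₂ ω) (B₁ ω) ≤ t}).toReal := by
  have hm : MeasurableSet {ω | max (A₂ ω) (B₁ ω) ≤ t} :=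
    measurableSet_le (hA₂.max hB₁) measurable_const
  have key := measureReal_union_add_inter (μ := P) (s := {ω | max (A₁ ω) (B₂ ω) ≤ t}) hm
  have h1 : P.real ({ω | max (A₁ ω) (B₂ ω) ≤ t} ∪ {ω | max (A₂ ω) (B₁ ω) ≤ t})
      ≤ P.real {ω | max (A₁ ω) (B₁ ω) ≤ t} := by
    refine measureReal_mono ?_
    rintro ω (h | h) <;> simp only [Set.mem_ofPred_eq, max_le_iff] at h ⊢
    · exact ⟨h.1, (hB ω).trans h.2⟩
    · exact ⟨(hA ω).trans h.1, h.2⟩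
  have h2 : P.real ({ω | max (A₁ ω) (B₂ ω) ≤ t} ∩ {ω | max (A₂ ω) (B₁ ω) ≤ t})
      ≤ P.real {ω | max (A₂ ω) (B₂ ω) ≤ t} := by
    refine measureReal_mono ?_
    rintro ω ⟨h, h'⟩
    simp only [Set.mem_ofPred_eq, max_le_iff] at h h' ⊢
    exact ⟨h'.1, h.2⟩
  simp only [Measure.real] at key h1 h2
  linarith
end

section
/- (Interaction contrast for the serial architecture.) Let (Ω, 𝔉, P) be a probability space and let A₁, A₂, B₁, B₂ : Ω → ℝ be nonnegative, integrable, measurable functions satisfying the prolongation constraints A₁(ω) ≤ A₂(ω) and B₁(ω) ≤ B₂(ω) for every ω ∈ Ω. Define T_{ij} = A_i + B_j for i, j ∈ {1,2}, and let c(s) = P(T₁₁ ≤ s) + P(T₂₂ ≤ s) − P(T₁₂ ≤ s) − P(T₂₁ ≤ s). Then: (i) for every t ≥ 0, ∫₀ᵗ c(s) ds ≥ 0; and (ii) ∫₀^∞ c(s) ds = 0. -/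
open MeasureTheory

universe u

/-- The interaction contrast at time `s` for the serial architecture
`T_{ij} = A_i + B_j`:
`c(s) = P(T₁₁ ≤ s) + P(T₂₂ ≤ s) − P(T₁₂ ≤ s) − P(T₂₁ ≤ s)`. -/
noncomputable def serialInteractionContrast
    {Ω : Type u} [MeasurableSpace Ω] (P : Measure Ω)
    (A₁ A₂ B₁ B₂ : Ω → ℝ) (s : ℝ) : ℝ :=
  (P {ω | A₁ ω + B₁ ω ≤ s}).toReal + (P {ω | A₂ ω + B₂ ω ≤ s}).toReal -
    (P {ω | A₁ ω + B₂ ω ≤ s}).toReal - (P {ω | A₂ ω + B₁ ω ≤ s}).toReal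

lemma aux_integrable {Ω : Type u} [MeasurableSpace Ω] (P : Measure Ω) [IsProbabilityMeasure P]
    (T : Ω → ℝ) (h0 : ∀ ω, 0 ≤ T ω) (hi : Integrable T P) :
    IntegrableOn (fun s => P.real {ω | s < T ω}) (Set.Ioi 0) := by
  have hanti : Antitone (fun s : ℝ => P.real {ω | s < T ω}) := by
    intro a b hab
    exact measureReal_mono (fun ω (hω : b < T ω) => lt_of_le_of_lt hab hω)
  refine ⟨hanti.measurable.aestronglyMeasurable, ?_⟩
  rw [hasFiniteIntegral_iff_ofReal (Filter.Eventually.of_forall fun s => measureReal_nonneg)]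
  have key := lintegral_eq_lintegral_meas_lt P (Filter.Eventually.of_forall h0) hi.aemeasurable
  have h2 := (hasFiniteIntegral_iff_ofReal (Filter.Eventually.of_forall h0)).1 hi.2
  rw [key] at h2
  simpa [ofReal_measureReal] using h2

lemma aux_min {Ω : Type u} [MeasurableSpace Ω] (P : Measure Ω) [IsProbabilityMeasure P]
    (T : Ω → ℝ) (h0 : ∀ ω, 0 ≤ T ω) (hi : Integrable T P) (t : ℝ) (ht : 0 ≤ t) :
    ∫ s in Set.Ioc 0 t, P.real {ω | s < T ω} = ∫ ω, min (T ω) t ∂P := by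
  have hm : Integrable (fun ω => min (T ω) t) P := hi.inf (integrable_const t)
  rw [hm.integral_eq_integral_meas_lt (Filter.Eventually.of_forall fun ω => le_min (h0 ω) ht)]
  have : (fun s : ℝ => P.real {ω | s < min (T ω) t}) =
      (Set.Iio t).indicator (fun s => P.real {ω | s < T ω}) := by
    funext s
    by_cases h : s < t
    · simp [h]
    · simp [h]
  rw [this, setIntegral_indicator measurableSet_Iio, Set.Ioi_inter_Iio,
    integral_Ioc_eq_integral_Ioo]

lemma aux_four (μ : Measure ℝ) (f g h k : ℝ → ℝ) (hf : Integrable f μ) (hg : Integrable g μ)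
    (hh : Integrable h μ) (hk : Integrable k μ) :
    ∫ s, ((f s + g s) - (h s + k s)) ∂μ =
      ((∫ s, f s ∂μ) + ∫ s, g s ∂μ) - ((∫ s, h s ∂μ) + ∫ s, k s ∂μ) := by
  have h1 : Integrable (fun s => f s + g s) μ := hf.add hg
  have h2 : Integrable (fun s => h s + k s) μ := hh.add hk
  rw [integral_sub h1 h2, integral_add hf hg, integral_add hh hk]

lemma aux_compl {Ω : Type u} [MeasurableSpace Ω] (P : Measure Ω) [IsProbabilityMeasure P]
    (T : Ω → ℝ) (hT : Measurable T) (s : ℝ) :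
    (P {ω | T ω ≤ s}).toReal = 1 - P.real {ω | s < T ω} := by
  have := probReal_compl_eq_one_sub (μ := P) (measurableSet_lt measurable_const hT : MeasurableSet {ω | s < T ω})
  rw [← this]
  congr 2
  ext ω
  simp

/-- Interaction contrast for the serial architecture. If the
nonnegative integrable process durations `A₁, A₂, B₁, B₂` on a common probability space
satisfy the prolongation constraints `A₁ ≤ A₂` and `B₁ ≤ B₂` pointwise, and the response
times are `T_{ij} = A_i + B_j`, then the interaction contrast `c` satisfies
(i) `∫₀ᵗ c(s) ds ≥ 0` for every `t ≥ 0`, and (ii) `∫₀^∞ c(s) ds = 0`. -/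
theorem interaction_contrast_serial
    {Ω : Type u} [MeasurableSpace Ω] (P : Measure Ω) [IsProbabilityMeasure P]
    (A₁ A₂ B₁ B₂ : Ω → ℝ)
    (hA₁ : Measurable A₁) (hA₂ : Measurable A₂)
    (hB₁ : Measurable B₁) (hB₂ : Measurable B₂)
    (hA₁0 : ∀ ω, 0 ≤ A₁ ω) (hA₂0 : ∀ ω, 0 ≤ A₂ ω)
    (hB₁0 : ∀ ω, 0 ≤ B₁ ω) (hB₂0 : ∀ ω, 0 ≤ B₂ ω)
    (hA₁int : Integrable A₁ P) (hA₂int : Integrable A₂ P)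
    (hB₁int : Integrable B₁ P) (hB₂int : Integrable B₂ P)
    (hA : ∀ ω, A₁ ω ≤ A₂ ω) (hB : ∀ ω, B₁ ω ≤ B₂ ω) :
    (∀ t : ℝ, 0 ≤ t →
      0 ≤ ∫ s in (0 : ℝ)..t, serialInteractionContrast P A₁ A₂ B₁ B₂ s) ∧
    (∫ s in Set.Ioi (0 : ℝ), serialInteractionContrast P A₁ A₂ B₁ B₂ s) = 0 := by
  have hc : (serialInteractionContrast P A₁ A₂ B₁ B₂) = fun s =>
      (P.real {ω | s < A₁ ω + B₂ ω} + P.real {ω | s < A₂ ω + B₁ ω}) -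
      (P.real {ω | s < A₁ ω + B₁ ω} + P.real {ω | s < A₂ ω + B₂ ω}) := by
    funext s
    unfold serialInteractionContrast
    rw [aux_compl P (fun ω => A₁ ω + B₁ ω) (hA₁.add hB₁), aux_compl P (fun ω => A₂ ω + B₂ ω) (hA₂.add hB₂),
      aux_compl P (fun ω => A₁ ω + B₂ ω) (hA₁.add hB₂), aux_compl P (fun ω => A₂ ω + B₁ ω) (hA₂.add hB₁)]
    ring
  have n11 := fun ω => add_nonneg (hA₁0 ω) (hB₁0 ω)
  have n12 := fun ω => add_nonneg (hA₁0 ω) (hB₂0 ω)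
  have n21 := fun ω => add_nonneg (hA₂0 ω) (hB₁0 ω)
  have n22 := fun ω => add_nonneg (hA₂0 ω) (hB₂0 ω)
  have i11 : Integrable (fun ω => A₁ ω + B₁ ω) P := hA₁int.add hB₁int
  have i12 : Integrable (fun ω => A₁ ω + B₂ ω) P := hA₁int.add hB₂int
  have i21 : Integrable (fun ω => A₂ ω + B₁ ω) P := hA₂int.add hB₁int
  have i22 : Integrable (fun ω => A₂ ω + B₂ ω) P := hA₂int.add hB₂int
  have g11 := aux_integrable P _ n11 i11
  have g12 := aux_integrable P _ n12 i12
  have g21 := aux_integrable P _ n21 i21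
  have g22 := aux_integrable P _ n22 i22
  rw [hc]
  constructor
  · intro t ht
    have hs : Set.Ioc 0 t ⊆ Set.Ioi (0 : ℝ) := Set.Ioc_subset_Ioi_self
    have m : ∀ {T : Ω → ℝ}, Integrable T P → Integrable (fun ω => min (T ω) t) P :=
      fun h => h.inf (integrable_const t)
    rw [intervalIntegral.integral_of_le ht,
      aux_four _ _ _ _ _ (g12.mono_set hs) (g21.mono_set hs)
        (g11.mono_set hs) (g22.mono_set hs),
      aux_min P _ n12 i12 t ht, aux_min P _ n21 i21 t ht,
      aux_min P _ n11 i11 t ht, aux_min P _ n22 i22 t ht,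
      ← integral_add (m i12) (m i21), ← integral_add (m i11) (m i22), sub_nonneg]
    refine integral_mono ((m i11).add (m i22)) ((m i12).add (m i21)) fun ω => ?_
    have a := hA ω
    have b := hB ω
    simp only [min_def]
    split_ifs <;> linarith
  · rw [aux_four _ _ _ _ _ g12 g21 g11 g22,
      ← i12.integral_eq_integral_meas_lt (Filter.Eventually.of_forall n12),
      ← i21.integral_eq_integral_meas_lt (Filter.Eventually.of_forall n21),
      ← i11.integral_eq_integral_meas_lt (Filter.Eventually.of_forall n11),
      ← i22.integral_eq_integral_meas_lt (Filter.Eventually.of_forall n22),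
      integral_add hA₁int hB₂int, integral_add hA₂int hB₁int,
      integral_add hA₁int hB₁int, integral_add hA₂int hB₂int]
    ring
end
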